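/- arXiv:2503.24179 — 7 statements merged into one kernel-verified Lean document; each statement's English description precedes it below -/
import Mathlib

section
/- Suppose 1/3 ≤ r < 1 and the reduction rate of the mixed transport is at most r, i.e., (x1 + x2 + d3 + z2 + z1)/(d1 + d2 + d3) ≤ r. Then x + y ≤ (2r/(1-r))·d1 (equivalently, (1-r)·(x + y) ≤ 2r·d1). -/
theorem stmt0 {B : Type*} [MetricSpace B] (t1s t1e t2s t2e t3s t3e : B)
    (hd1 : 0 < dist t1s t1e) (hd2 : 0 < dist t2s t2e) (hd3 : 0 < dist t3s t3e)
    (r : ℝ) (hr1 : 1/3 ≤ r) (hr2 : r < 1)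
    (hred : (dist t1s t2s + dist t2s t3s + dist t3s t3e + dist t3e t2e + dist t2e t1e) / (dist t1s t1e + dist t2s t2e + dist t3s t3e) ≤ r) :
    dist t1s t3s + dist t3s t1e ≤ (2*r/(1-r)) * (dist t1s t1e) := by
  rw [div_le_iff₀ (by positivity)] at hred
  have h1 := dist_triangle t1s t2s t3s
  have h2 := dist_triangle4 t3s t3e t2e t1e
  have h3 := dist_triangle4 t2s t3s t3e t2e
  have h4 := dist_triangle4 t2s t1s t1e t2e
  have h5 := dist_triangle4 t3s t1s t1e t3e
  have h6 := dist_triangle t3e t2e t1e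
  rw [dist_comm t2s t1s, dist_comm t1e t2e] at h4
  rw [dist_comm t3s t1s, dist_comm t1e t3e] at h5
  rw [div_mul_eq_mul_div, le_div_iff₀ (by linarith)]
  set S := dist t1s t2s + dist t2s t3s + dist t3s t3e + dist t3e t2e + dist t2e t1e with hS
  have h7 : dist t1s t1e + dist t2s t2e + dist t3s t3e ≤ 2 * dist t1s t1e + S := by linarith
  have h8 := mul_le_mul_of_nonneg_left h7 (by linarith : (0:ℝ) ≤ r)
  have h9 : dist t1s t3s + dist t3s t1e ≤ S := by linarith
  have h10 := mul_le_mul_of_nonneg_right h9 (by linarith : (0:ℝ) ≤ 1 - r)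
  linarith
end

section
/- Suppose 1/3 ≤ r < 1 and the reduction rate of the mixed transport is at most r, i.e., (x1 + x2 + d3 + z2 + z1)/(d1 + d2 + d3) ≤ r. Then (1 - 2r)·d3 + (1 - r)·z ≤ (r - 1)·x + r·d1. -/
theorem stmt1 {B : Type*} [MetricSpace B] (t1s t1e t2s t2e t3s t3e : B)
    (hd1 : 0 < dist t1s t1e) (hd2 : 0 < dist t2s t2e) (hd3 : 0 < dist t3s t3e)
    (r : ℝ) (hr1 : 1/3 ≤ r) (hr2 : r < 1)
    (hred : (dist t1s t2s + dist t2s t3s + dist t3s t3e + dist t3e t2e + dist t2e t1e) / (dist t1s t1e + dist t2s t2e + dist t3s t3e) ≤ r) :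
    (1 - 2*r) * (dist t3s t3e) + (1 - r) * (dist t3e t1e) ≤ (r - 1) * (dist t1s t3s) + r * (dist t1s t1e) := by
  rw [div_le_iff₀ (by positivity)] at hred
  have hr0 : 0 ≤ r := by linarith
  have hr3 : 0 ≤ 1 - r := by linarith
  have h2 : dist t2s t2e ≤ dist t2s t3s + dist t3s t3e + dist t3e t2e :=
    dist_triangle4 _ _ _ _
  have a := mul_le_mul_of_nonneg_left h2 hr0
  have b := mul_le_mul_of_nonneg_left (dist_triangle t1s t2s t3s) hr3
  have c := mul_le_mul_of_nonneg_left (dist_triangle t3e t2e t1e) hr3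
  have e := mul_nonneg hr0 (dist_nonneg (x := t1s) (y := t2s))
  have f := mul_nonneg hr0 (dist_nonneg (x := t2e) (y := t1e))
  linarith
end

section
/- Suppose 1/3 ≤ r < 1 and the reduction rate of the mixed transport is at most r, i.e., (x1 + x2 + d3 + z2 + z1)/(d1 + d2 + d3) ≤ r. Then x1 + (1 - r)·x2 ≤ r·d1 + (2r - 1)·d3 - (1 - r)·z. -/
theorem stmt2 {B : Type*} [MetricSpace B] (t1s t1e t2s t2e t3s t3e : B)
    (hd1 : 0 < dist t1s t1e) (hd2 : 0 < dist t2s t2e) (hd3 : 0 < dist t3s t3e)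
    (r : ℝ) (hr1 : 1/3 ≤ r) (hr2 : r < 1)
    (hred : (dist t1s t2s + dist t2s t3s + dist t3s t3e + dist t3e t2e + dist t2e t1e) / (dist t1s t1e + dist t2s t2e + dist t3s t3e) ≤ r) :
    dist t1s t2s + (1 - r) * (dist t2s t3s) ≤ r * (dist t1s t1e) + (2*r - 1) * (dist t3s t3e) - (1 - r) * (dist t3e t1e) := by
  rw [div_le_iff₀ (by positivity)] at hred
  have h1 : dist t2s t2e ≤ dist t2s t3s + dist t3s t3e + dist t3e t2e :=
    dist_triangle4 t2s t3s t3e t2e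
  have h2 : dist t3e t1e ≤ dist t3e t2e + dist t2e t1e := dist_triangle _ _ _
  have h3 : 0 ≤ dist t2e t1e := dist_nonneg
  have hr0 : 0 ≤ r := by linarith
  have h4 := mul_le_mul_of_nonneg_left h1 hr0
  have h5 := mul_le_mul_of_nonneg_left h2 (sub_nonneg.2 hr2.le)
  have h6 := mul_nonneg hr0 h3
  linarith
end

section
/- Suppose 1/3 ≤ r < 1 and the reduction rate of the mixed transport is at most r, i.e., (x1 + x2 + d3 + z2 + z1)/(d1 + d2 + d3) ≤ r. Then all four of the following pruning conditions hold simultaneously: (i) x + y ≤ (2r/(1-r))·d1; (ii) (1 - 2r)·d3 + (1 - r)·z ≤ (r - 1)·x + r·d1; (iii) x1 + (1 - r)·x2 ≤ r·d1 + (2r - 1)·d3 - (1 - r)·z; (iv) d2 ≥ (1/r)·(x1 + x2 + z) - d1 + ((1 - r)/r)·d3. (Hence the pruning algorithm never discards a mixed transport whose reduction rate is at most r, and it correctly outputs the set of all such mixed transports.) -/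
theorem stmt4 {B : Type*} [MetricSpace B] (t1s t1e t2s t2e t3s t3e : B)
    (hd1 : 0 < dist t1s t1e) (hd2 : 0 < dist t2s t2e) (hd3 : 0 < dist t3s t3e)
    (r : ℝ) (hr1 : 1/3 ≤ r) (hr2 : r < 1)
    (hred : (dist t1s t2s + dist t2s t3s + dist t3s t3e + dist t3e t2e + dist t2e t1e) / (dist t1s t1e + dist t2s t2e + dist t3s t3e) ≤ r) :
    (dist t1s t3s + dist t3s t1e ≤ (2*r/(1-r)) * (dist t1s t1e)) ∧ ((1 - 2*r) * (dist t3s t3e) + (1 - r) * (dist t3e t1e) ≤ (r - 1) * (dist t1s t3s) + r * (dist t1s t1e)) ∧ (dist t1s t2s + (1 - r) * (dist t2s t3s) ≤ r * (dist t1s t1e) + (2*r - 1) * (dist t3s t3e) - (1 - r) * (dist t3e t1e)) ∧ (dist t2s t2e ≥ (1/r) * (dist t1s t2s + dist t2s t3s + dist t3e t1e) - (dist t1s t1e) + ((1 - r)/r) * (dist t3s t3e)) := by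
  have hr0 : 0 < r := by linarith
  have hr3 : 0 < 1 - r := by linarith
  rw [div_le_iff₀ (by linarith)] at hred
  have hz : dist t3e t1e ≤ dist t3e t2e + dist t2e t1e := dist_triangle _ _ _
  have hx : dist t1s t3s ≤ dist t1s t2s + dist t2s t3s := dist_triangle _ _ _
  have hy : dist t3s t1e ≤ dist t3s t3e + dist t3e t1e := dist_triangle _ _ _
  have hd2a : dist t2s t2e ≤ dist t2s t3s + dist t3s t3e + dist t3e t2e :=
    dist_triangle4 _ _ _ _
  have hd2b : dist t2s t2e ≤ dist t1s t2s + dist t1s t1e + dist t2e t1e := by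
    have h := dist_triangle4 t2s t1s t1e t2e
    rwa [dist_comm t2s t1s, dist_comm t1e t2e] at h
  have px1 : 0 ≤ dist t1s t2s := dist_nonneg
  have px2 : 0 ≤ dist t2s t3s := dist_nonneg
  have pz1 : 0 ≤ dist t2e t1e := dist_nonneg
  have pz2 : 0 ≤ dist t3e t2e := dist_nonneg
  generalize dist t1s t2s = x1 at *
  generalize dist t2s t3s = x2 at *
  generalize dist t2e t1e = z1 at *
  generalize dist t3e t2e = z2 at *
  generalize dist t1s t1e = d1 at *
  generalize dist t2s t2e = d2 at *
  generalize dist t3s t3e = d3 at *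
  generalize dist t1s t3s = x at *
  generalize dist t3s t1e = y at *
  generalize dist t3e t1e = z at *
  have ha := mul_le_mul_of_nonneg_left hd2a hr0.le
  have hb := mul_le_mul_of_nonneg_left hd2b hr0.le
  have hz' := mul_le_mul_of_nonneg_left hz hr3.le
  have hx' := mul_le_mul_of_nonneg_left hx hr3.le
  have hy' := mul_le_mul_of_nonneg_left hy hr3.le
  have q1 := mul_nonneg hr0.le px1
  have q2 := mul_nonneg hr0.le px2
  have q3 := mul_nonneg hr0.le pz1
  have q4 := mul_nonneg hr0.le pz2
  refine ⟨?_, by linarith, by linarith, ?_⟩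
  · rw [div_mul_eq_mul_div, le_div_iff₀ hr3]
    linarith
  · have h : (1 / r) * (x1 + x2 + z) - d1 + ((1 - r) / r) * d3
        = (x1 + x2 + z - r * d1 + (1 - r) * d3) / r := by
      field_simp
    rw [ge_iff_le, h, div_le_iff₀ hr0]
    linarith
end

section
/- The reduction rate of any mixed transport is at least 1/3; that is, (x1 + x2 + d3 + z2 + z1)/(d1 + d2 + d3) ≥ 1/3 (equivalently, d1 + d2 + d3 ≤ 3·(x1 + x2 + d3 + z2 + z1)). -/
theorem stmt5 {B : Type*} [MetricSpace B] (t1s t1e t2s t2e t3s t3e : B)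
    (hd1 : 0 < dist t1s t1e) (hd2 : 0 < dist t2s t2e) (hd3 : 0 < dist t3s t3e) :
    (1:ℝ)/3 ≤ (dist t1s t2s + dist t2s t3s + dist t3s t3e + dist t3e t2e + dist t2e t1e) / (dist t1s t1e + dist t2s t2e + dist t3s t3e) := by
  rw [div_le_div_iff₀ (by norm_num) (by linarith)]
  have h1 := dist_triangle t1s t2s t1e
  have h2 := dist_triangle t2s t2e t1e
  have h3 := dist_triangle t2s t3s t2e
  have h4 := dist_triangle t3s t3e t2e
  have h5 := dist_nonneg (x := t1s) (y := t2s)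
  have h6 := dist_nonneg (x := t2s) (y := t3s)
  have h7 := dist_nonneg (x := t3e) (y := t2e)
  have h8 := dist_nonneg (x := t2e) (y := t1e)
  linarith
end

section
/- The reduction rate of any mixed transport is bounded below as follows: (x + y)/(x + y + 2·d1) ≤ (x1 + x2 + d3 + z2 + z1)/(d1 + d2 + d3). -/
theorem stmt7 {B : Type*} [MetricSpace B] (t1s t1e t2s t2e t3s t3e : B)
    (hd1 : 0 < dist t1s t1e) (hd2 : 0 < dist t2s t2e) (hd3 : 0 < dist t3s t3e) :
    (dist t1s t3s + dist t3s t1e) / (dist t1s t3s + dist t3s t1e + 2 * (dist t1s t1e)) ≤ (dist t1s t2s + dist t2s t3s + dist t3s t3e + dist t3e t2e + dist t2e t1e) / (dist t1s t1e + dist t2s t2e + dist t3s t3e) := by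
  have a1 := dist_triangle t1s t2s t3s
  have a2 := dist_triangle t3s t3e t1e
  have a3 := dist_triangle t3e t2e t1e
  have a4 := dist_triangle t2s t1s t2e
  have a5 := dist_triangle t1s t1e t2e
  rw [dist_comm t2s t1s] at a4
  rw [dist_comm t1e t2e] at a5
  have p1 : 0 ≤ dist t1s t3s := dist_nonneg
  have p2 : 0 ≤ dist t3s t1e := dist_nonneg
  have p3 : 0 ≤ dist t2s t3s := dist_nonneg
  have p4 : 0 ≤ dist t3e t2e := dist_nonneg
  rw [div_le_div_iff₀ (by linarith) (by linarith)]
  set s := dist t1s t3s + dist t3s t1e with hs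
  set N := dist t1s t2s + dist t2s t3s + dist t3s t3e + dist t3e t2e + dist t2e t1e with hN
  have h1 : s ≤ N := by linarith
  have h2 : dist t1s t1e + dist t2s t2e + dist t3s t3e ≤ N + 2 * dist t1s t1e := by linarith
  have h0 : 0 ≤ s := by linarith
  have h3 := mul_le_mul_of_nonneg_left h2 h0
  have h4 := mul_le_mul_of_nonneg_right h1 hd1.le
  linarith
end

section
/- The reduction rate of any mixed transport is bounded below as follows: (x + z + d3)/(x + z + d1 + 2·d3) ≤ (x1 + x2 + d3 + z2 + z1)/(d1 + d2 + d3). -/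
theorem stmt8 {B : Type*} [MetricSpace B] (t1s t1e t2s t2e t3s t3e : B)
    (hd1 : 0 < dist t1s t1e) (hd2 : 0 < dist t2s t2e) (hd3 : 0 < dist t3s t3e) :
    (dist t1s t3s + dist t3e t1e + dist t3s t3e) / (dist t1s t3s + dist t3e t1e + dist t1s t1e + 2 * (dist t3s t3e)) ≤ (dist t1s t2s + dist t2s t3s + dist t3s t3e + dist t3e t2e + dist t2e t1e) / (dist t1s t1e + dist t2s t2e + dist t3s t3e) := by
  have h1 := dist_triangle t1s t2s t3s
  have h2 := dist_triangle t3e t2e t1e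
  have h3 := dist_triangle4 t2s t3s t3e t2e
  have p1 : 0 ≤ dist t1s t2s := dist_nonneg
  have p2 : 0 ≤ dist t2e t1e := dist_nonneg
  have p3 : 0 ≤ dist t1s t3s := dist_nonneg
  have p4 : 0 ≤ dist t3e t1e := dist_nonneg
  rw [div_le_div_iff₀ (by positivity) (by positivity)]
  have a : 0 ≤ (dist t1s t2s + dist t2s t3s + dist t3e t2e + dist t2e t1e
      - (dist t1s t3s + dist t3e t1e)) * (dist t1s t1e + dist t3s t3e) :=
    mul_nonneg (by linarith) (by linarith)
  have b : 0 ≤ (dist t1s t3s + dist t3e t1e + dist t3s t3e) *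
      (dist t1s t2s + dist t2s t3s + dist t3e t2e + dist t2e t1e + dist t3s t3e
        - dist t2s t2e) :=
    mul_nonneg (by linarith) (by linarith)
  linarith
end
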